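/- Let (S,d) be a complete separable metric space in which any two elements have distance at most one, and let μ,ν ∈ M_{≤1}(S). Then the classical Wasserstein distance between the probability measures μ* and ν* on the augmented space (S*, d*) equals the unbalanced Wasserstein distance W(μ,ν). -/

import Mathlib

open MeasureTheory Set

noncomputable section

def uwAux {X : Type _} [MeasurableSpace X] (d : X → X → ℝ) (μ ν : Measure X) : ℝ :=
  (μ Set.univ).toReal - (ν Set.univ).toReal +
    sInf {r : ℝ | ∃ γ : Measure (X × X), γ Set.univ ≤ 1 ∧
      γ.map Prod.fst ≤ μ ∧ γ.map Prod.snd = ν ∧ r = ∫ p, d p.1 p.2 ∂γ}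

open Classical in
/-- The unbalanced Wasserstein distance w.r.t. a distance function `d`:
`‖μ‖ - ‖ν‖` plus the optimal transport cost over sub-couplings, where w.l.o.g.
`‖μ‖ ≥ ‖ν‖`. -/
def uwDist {X : Type _} [MeasurableSpace X] (d : X → X → ℝ) (μ ν : Measure X) : ℝ :=
  if ν Set.univ ≤ μ Set.univ then uwAux d μ ν else uwAux d ν μ

/-- The classical Wasserstein distance (over couplings) w.r.t. a cost `d`. -/
def wassersteinDist {X : Type _} [MeasurableSpace X] (d : X → X → ℝ)
    (μ ν : Measure X) : ℝ :=
  sInf {r : ℝ | ∃ γ : Measure (X × X),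
    γ.map Prod.fst = μ ∧ γ.map Prod.snd = ν ∧ r = ∫ p, d p.1 p.2 ∂γ}


/-- The metric `d*` on the augmented space `S* = S ∪ {*}` (realized as `S ⊕ Unit`):
it extends `d`, the new point has distance one to all points of `S`. -/
def dStar {S : Type} [MetricSpace S] : (S ⊕ Unit) → (S ⊕ Unit) → ℝ
  | Sum.inl x, Sum.inl y => dist x y
  | Sum.inl _, Sum.inr _ => 1
  | Sum.inr _, Sum.inl _ => 1
  | Sum.inr _, Sum.inr _ => 0

/-- The probability measure `μ*` on `S*` obtained from `μ` by putting the missing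
mass `1 - ‖μ‖` on the new point `*`. -/
def starMeasure {S : Type} [MeasurableSpace S] (μ : Measure S) : Measure (S ⊕ Unit) :=
  μ.map Sum.inl + (1 - μ Set.univ) • Measure.dirac (Sum.inr ())

/-!
Write `A` for the restriction to `S × S` of a coupling `Γ` of `μ*` and `ν*`. Pointwise
`c*(x, y) = 1_S(x) + 1_S(y) + (c(x, y) - 2) 1_{S × S}(x, y)`, so
`∫ c* dΓ = ‖μ‖ + ‖ν‖ + ∫ (c - 2) dA`: the cost of `Γ` only depends on `A`. If `‖ν‖ ≤ ‖μ‖`, then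
`A` can be enlarged to a measure `γ` with first marginal at most `μ` and second marginal `ν`, and
because `c ≤ 2` this does not increase the cost, which becomes `‖μ‖ - ‖ν‖ + ∫ c dγ`. Conversely,
every such `γ` is the restriction of a coupling of `μ*` and `ν*`: send the unused part of `μ` to
the new point.
-/

section MapComap

variable {α β γ δ : Type*} [MeasurableSpace α] [MeasurableSpace β] [MeasurableSpace γ]
  [MeasurableSpace δ]

theorem measurableEmbedding_inl : MeasurableEmbedding (Sum.inl : α → α ⊕ β) :=
  ⟨Sum.inl_injective, measurable_inl, fun _ hs => hs.inl_image⟩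

theorem comap_map_eq_zero_of_disjoint_range {f : α → γ} {g : β → γ} (hf : MeasurableEmbedding f)
    (hg : Measurable g) (hfg : Disjoint (range f) (range g)) (μ : Measure β) :
    (μ.map g).comap f = 0 := by
  ext s hs
  have hpre : g ⁻¹' (f '' s) = ∅ :=
    preimage_eq_empty (hfg.mono_left (image_subset_range f s))
  rw [hf.comap_apply, Measure.map_apply hg (hf.measurableSet_image' hs), hpre, measure_empty,
    Measure.coe_zero, Pi.zero_apply]

theorem fst_map_prodMap {f : α → γ} {g : β → δ} (hf : Measurable f) (hg : Measurable g)
    (Γ : Measure (α × β)) : (Γ.map (Prod.map f g)).fst = Γ.fst.map f := by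
  rw [Measure.fst, Measure.fst, Measure.map_map measurable_fst (hf.prodMap hg),
    Measure.map_map hf measurable_fst, Prod.map_fst']

theorem snd_map_prodMap {f : α → γ} {g : β → δ} (hf : Measurable f) (hg : Measurable g)
    (Γ : Measure (α × β)) : (Γ.map (Prod.map f g)).snd = Γ.snd.map g := by
  rw [Measure.snd, Measure.snd, Measure.map_map measurable_snd (hf.prodMap hg),
    Measure.map_map hg measurable_snd, Prod.map_snd']

theorem fst_comap_prodMap_le {f : α → γ} {g : β → δ} (hf : MeasurableEmbedding f)
    (hg : MeasurableEmbedding g) (Γ : Measure (γ × δ)) :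
    (Γ.comap (Prod.map f g)).fst ≤ Γ.fst.comap f := by
  refine Measure.le_iff.2 fun s hs => ?_
  rw [Measure.fst_apply hs, (hf.prodMap hg).comap_apply, hf.comap_apply,
    Measure.fst_apply (hf.measurableSet_image' hs)]
  refine measure_mono ?_
  rintro _ ⟨p, hp, rfl⟩
  exact mem_image_of_mem f hp

theorem snd_comap_prodMap_le {f : α → γ} {g : β → δ} (hf : MeasurableEmbedding f)
    (hg : MeasurableEmbedding g) (Γ : Measure (γ × δ)) :
    (Γ.comap (Prod.map f g)).snd ≤ Γ.snd.comap g := by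
  refine Measure.le_iff.2 fun s hs => ?_
  rw [Measure.snd_apply hs, (hf.prodMap hg).comap_apply, hg.comap_apply,
    Measure.snd_apply (hg.measurableSet_image' hs)]
  refine measure_mono ?_
  rintro _ ⟨p, hp, rfl⟩
  exact mem_image_of_mem g hp

end MapComap

section PartialCoupling

variable {α β : Type*} [MeasurableSpace α] [MeasurableSpace β]

theorem exists_fst_le_snd_eq (μ : Measure α) [IsFiniteMeasure μ] (ν : Measure β)
    (h : ν univ ≤ μ univ) : ∃ γ : Measure (α × β), γ.fst ≤ μ ∧ γ.snd = ν := by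
  have : IsFiniteMeasure ν := ⟨h.trans_lt (measure_lt_top μ univ)⟩
  rcases eq_or_ne (μ univ) 0 with hμ | hμ
  · have hν : ν = 0 := Measure.measure_univ_eq_zero.1 (le_antisymm (hμ ▸ h) zero_le)
    exact ⟨0, by simp only [Measure.fst_zero, Measure.zero_le], by simp only [Measure.snd_zero, hν]⟩
  refine ⟨(μ univ)⁻¹ • μ.prod ν, ?_, ?_⟩
  · have hmass : (μ univ)⁻¹ * ν univ ≤ 1 :=
      (mul_le_mul_right h _).trans (ENNReal.inv_mul_le_one _)
    rw [Measure.fst, Measure.map_smul, Measure.map_fst_prod, smul_smul]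
    exact Measure.le_iff.2 fun s _ => mul_le_of_le_one_left' hmass
  · rw [Measure.snd, Measure.map_smul, Measure.map_snd_prod, smul_smul,
      ENNReal.inv_mul_cancel hμ (measure_ne_top μ univ), one_smul]

theorem exists_ge_fst_le_snd_eq {μ : Measure α} [IsFiniteMeasure μ] {ν : Measure β}
    (h : ν univ ≤ μ univ) {A : Measure (α × β)} (hfst : A.fst ≤ μ) (hsnd : A.snd ≤ ν) :
    ∃ γ : Measure (α × β), A ≤ γ ∧ γ.fst ≤ μ ∧ γ.snd = ν := by
  have : IsFiniteMeasure A :=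
    ⟨Measure.fst_univ (ρ := A) ▸ (hfst univ).trans_lt (measure_lt_top μ univ)⟩
  have hres : (ν - A.snd) univ ≤ (μ - A.fst) univ := by
    rw [Measure.sub_apply .univ hfst, Measure.sub_apply .univ hsnd, Measure.fst_univ,
      Measure.snd_univ]
    exact tsub_le_tsub_right h _
  have : IsFiniteMeasure (μ - A.fst) := isFiniteMeasure_of_le μ Measure.sub_le
  obtain ⟨E, hE_fst, hE_snd⟩ := exists_fst_le_snd_eq (μ - A.fst) (ν - A.snd) hres
  refine ⟨E + A, Measure.le_add_left le_rfl, ?_, ?_⟩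
  · rw [Measure.fst_add, ← Measure.sub_add_cancel_of_le hfst]
    gcongr
  · rw [Measure.snd_add, hE_snd, Measure.sub_add_cancel_of_le hsnd]

theorem integrable_cost {c : α → β → ℝ} {a b : ℝ} (hc : Measurable fun p : α × β => c p.1 p.2)
    (ha : ∀ x y, a ≤ c x y) (hb : ∀ x y, c x y ≤ b) (γ : Measure (α × β)) [IsFiniteMeasure γ] :
    Integrable (fun p => c p.1 p.2) γ :=
  .of_mem_Icc a b hc.aemeasurable (.of_forall fun p => ⟨ha p.1 p.2, hb p.1 p.2⟩)

theorem integral_sub_const_of_snd_eq {γ : Measure (α × β)} [IsFiniteMeasure γ] {ν : Measure β}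
    {f : α × β → ℝ} (hf : Integrable f γ) (hsnd : γ.snd = ν) (k : ℝ) :
    ∫ p, (f p - k) ∂γ = ∫ p, f p ∂γ - k * ν.real univ := by
  have hmass : γ.real univ = ν.real univ := by
    rw [measureReal_def, measureReal_def, ← hsnd, Measure.snd_univ]
  rw [integral_sub hf (integrable_const k), integral_const, hmass, smul_eq_mul, mul_comm]

end PartialCoupling

section Infimum

variable {X : Type*} [MeasurableSpace X] {c : X → X → ℝ} {μ ν : Measure X}

theorem wassersteinDist_le_integral (hc : ∀ x y, 0 ≤ c x y) {Γ : Measure (X × X)}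
    (hfst : Γ.fst = μ) (hsnd : Γ.snd = ν) : wassersteinDist c μ ν ≤ ∫ p, c p.1 p.2 ∂Γ := by
  refine csInf_le ⟨0, ?_⟩ ⟨Γ, hfst, hsnd, rfl⟩
  rintro _ ⟨Γ, -, -, rfl⟩
  exact integral_nonneg fun p => hc p.1 p.2

theorem uwAux_le_add_integral (hc : ∀ x y, 0 ≤ c x y) (hν : ν univ ≤ 1) {γ : Measure (X × X)}
    (hfst : γ.fst ≤ μ) (hsnd : γ.snd = ν) :
    uwAux c μ ν ≤ μ.real univ - ν.real univ + ∫ p, c p.1 p.2 ∂γ := by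
  have hmass : γ univ ≤ 1 := by rwa [← Measure.snd_univ, hsnd]
  refine add_le_add le_rfl ?_
  refine csInf_le ⟨0, ?_⟩ ⟨γ, hmass, hfst, hsnd, rfl⟩
  rintro _ ⟨γ, -, -, -, rfl⟩
  exact integral_nonneg fun p => hc p.1 p.2

theorem le_wassersteinDist [IsProbabilityMeasure μ] [IsProbabilityMeasure ν] {r : ℝ}
    (h : ∀ Γ : Measure (X × X), Γ.fst = μ → Γ.snd = ν → r ≤ ∫ p, c p.1 p.2 ∂Γ) :
    r ≤ wassersteinDist c μ ν := by
  refine le_csInf ⟨_, μ.prod ν, Measure.fst_prod, Measure.snd_prod, rfl⟩ ?_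
  rintro _ ⟨Γ, hfst, hsnd, rfl⟩
  exact h Γ hfst hsnd

theorem le_uwAux [IsFiniteMeasure μ] (hν : ν univ ≤ 1) (hνμ : ν univ ≤ μ univ) {r : ℝ}
    (h : ∀ γ : Measure (X × X), γ.fst ≤ μ → γ.snd = ν →
      r ≤ μ.real univ - ν.real univ + ∫ p, c p.1 p.2 ∂γ) :
    r ≤ uwAux c μ ν := by
  obtain ⟨γ₀, hfst₀, hsnd₀⟩ := exists_fst_le_snd_eq μ ν hνμ
  have hmass₀ : γ₀ univ ≤ 1 := by rwa [← Measure.snd_univ, hsnd₀]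
  refine sub_le_iff_le_add'.1 (le_csInf ⟨_, γ₀, hmass₀, hfst₀, hsnd₀, rfl⟩ ?_)
  rintro _ ⟨γ, -, hfst, hsnd, rfl⟩
  exact sub_le_iff_le_add'.2 (h γ hfst hsnd)

theorem wassersteinDist_comm (hc : ∀ x y, c x y = c y x) (μ ν : Measure X) :
    wassersteinDist c μ ν = wassersteinDist c ν μ := by
  have integral_swap (Γ : Measure (X × X)) :
      ∫ p, c p.1 p.2 ∂(Γ.map Prod.swap) = ∫ p, c p.1 p.2 ∂Γ := by
    calc ∫ p, c p.1 p.2 ∂(Γ.map Prod.swap) = ∫ p, c p.2 p.1 ∂Γ :=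
          MeasurableEquiv.prodComm.measurableEmbedding.integral_map _
      _ = ∫ p, c p.1 p.2 ∂Γ := integral_congr_ae (.of_forall fun p => hc p.2 p.1)
  unfold wassersteinDist
  congr 1
  ext r
  constructor <;> rintro ⟨Γ, hfst, hsnd, rfl⟩ <;>
    exact ⟨Γ.map Prod.swap, Measure.fst_map_swap.trans hsnd, Measure.snd_map_swap.trans hfst,
      (integral_swap Γ).symm⟩

end Infimum

section AugmentedCost

variable {S : Type*} {c : S → S → ℝ}

/-- The extension `c*` to `S ∪ {*}` of a cost `c` on `S` which charges `1` for moving a unit of mass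
between `S` and `*`; the metric `d*` is the case `c = d`. -/
def augmentedCost (c : S → S → ℝ) : S ⊕ Unit → S ⊕ Unit → ℝ
  | Sum.inl x, Sum.inl y => c x y
  | Sum.inl _, Sum.inr _ => 1
  | Sum.inr _, Sum.inl _ => 1
  | Sum.inr _, Sum.inr _ => 0

theorem augmentedCost_dist {S : Type} [MetricSpace S] : augmentedCost (dist (α := S)) = dStar := by
  ext (x | x) (y | y) <;> rfl

theorem augmentedCost_nonneg (hc : ∀ x y, 0 ≤ c x y) (x y : S ⊕ Unit) :
    0 ≤ augmentedCost c x y := by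
  rcases x with _ | _ <;> rcases y with _ | _ <;> simp [augmentedCost, hc]

theorem augmentedCost_comm (hc : ∀ x y, c x y = c y x) (x y : S ⊕ Unit) :
    augmentedCost c x y = augmentedCost c y x := by
  rcases x with _ | _ <;> rcases y with _ | _ <;> simp [augmentedCost, hc]

theorem augmentedCost_eq_indicator_add (p : (S ⊕ Unit) × (S ⊕ Unit)) :
    augmentedCost c p.1 p.2 =
      (Prod.fst ⁻¹' range Sum.inl).indicator 1 p + (Prod.snd ⁻¹' range Sum.inl).indicator 1 p +
        (range (Prod.map Sum.inl Sum.inl)).indicator (fun q => augmentedCost c q.1 q.2 - 2) p := by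
  rcases p with ⟨_ | _, _ | _⟩ <;> simp [augmentedCost, one_add_one_eq_two]

variable [MeasurableSpace S]

/-- The part inside `S × S` of a transport plan on the augmented space `S ∪ {*}`: the mass that
neither starts nor ends at `*`. -/
def basePart (Γ : Measure ((S ⊕ Unit) × (S ⊕ Unit))) : Measure (S × S) :=
  Γ.comap (Prod.map Sum.inl Sum.inl)

theorem measurableEmbedding_prodMap_inl_inl :
    MeasurableEmbedding (Prod.map Sum.inl Sum.inl : S × S → (S ⊕ Unit) × (S ⊕ Unit)) :=
  measurableEmbedding_inl.prodMap measurableEmbedding_inl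

theorem map_basePart (Γ : Measure ((S ⊕ Unit) × (S ⊕ Unit))) :
    (basePart Γ).map (Prod.map Sum.inl Sum.inl) = Γ.restrict (range (Prod.map Sum.inl Sum.inl)) :=
  measurableEmbedding_prodMap_inl_inl.map_comap Γ

instance isFiniteMeasure_basePart (Γ : Measure ((S ⊕ Unit) × (S ⊕ Unit))) [IsFiniteMeasure Γ] :
    IsFiniteMeasure (basePart Γ) :=
  ⟨measurableEmbedding_prodMap_inl_inl.comap_apply Γ univ ▸ measure_lt_top Γ _⟩

theorem integral_augmentedCost (Γ : Measure ((S ⊕ Unit) × (S ⊕ Unit))) [IsFiniteMeasure Γ]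
    (hc : Integrable (fun p => c p.1 p.2) (basePart Γ)) :
    ∫ p, augmentedCost c p.1 p.2 ∂Γ =
      Γ.fst.real (range Sum.inl) + Γ.snd.real (range Sum.inl) +
        ∫ p, (c p.1 p.2 - 2) ∂(basePart Γ) := by
  have hemb := measurableEmbedding_prodMap_inl_inl (S := S)
  have hfst : MeasurableSet (Prod.fst ⁻¹' range Sum.inl : Set ((S ⊕ Unit) × (S ⊕ Unit))) :=
    measurable_fst measurableSet_range_inl
  have hsnd : MeasurableSet (Prod.snd ⁻¹' range Sum.inl : Set ((S ⊕ Unit) × (S ⊕ Unit))) :=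
    measurable_snd measurableSet_range_inl
  have hint_fst :
      Integrable ((Prod.fst ⁻¹' range Sum.inl).indicator (1 : (S ⊕ Unit) × (S ⊕ Unit) → ℝ)) Γ :=
    (integrable_const (1 : ℝ)).indicator hfst
  have hint_snd :
      Integrable ((Prod.snd ⁻¹' range Sum.inl).indicator (1 : (S ⊕ Unit) × (S ⊕ Unit) → ℝ)) Γ :=
    (integrable_const (1 : ℝ)).indicator hsnd
  have hint_base : IntegrableOn (fun p => augmentedCost c p.1 p.2 - 2)
      (range (Prod.map Sum.inl Sum.inl)) Γ := by
    rw [IntegrableOn, ← map_basePart, hemb.integrable_map_iff]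
    exact hc.sub (integrable_const 2)
  have hbase : ∫ p in range (Prod.map Sum.inl Sum.inl), (augmentedCost c p.1 p.2 - 2) ∂Γ =
      ∫ p, (c p.1 p.2 - 2) ∂(basePart Γ) := by
    rw [← map_basePart, hemb.integral_map]
    rfl
  calc ∫ p, augmentedCost c p.1 p.2 ∂Γ
      = Γ.real (Prod.fst ⁻¹' range Sum.inl) + Γ.real (Prod.snd ⁻¹' range Sum.inl) +
          ∫ p in range (Prod.map Sum.inl Sum.inl), (augmentedCost c p.1 p.2 - 2) ∂Γ := by
        rw [integral_congr_ae (.of_forall augmentedCost_eq_indicator_add),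
          integral_add (hint_fst.fun_add hint_snd)
            (hint_base.integrable_indicator hemb.measurableSet_range),
          integral_add hint_fst hint_snd, integral_indicator_one hfst, integral_indicator_one hsnd,
          integral_indicator hemb.measurableSet_range]
    _ = Γ.fst.real (range Sum.inl) + Γ.snd.real (range Sum.inl) +
          ∫ p, (c p.1 p.2 - 2) ∂(basePart Γ) := by
        rw [hbase, Measure.fst, Measure.snd,
          map_measureReal_apply measurable_fst measurableSet_range_inl,
          map_measureReal_apply measurable_snd measurableSet_range_inl]

end AugmentedCost

section StarMeasure

variable {S : Type} [MeasurableSpace S]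

theorem isProbabilityMeasure_starMeasure {μ : Measure S} (hμ : μ univ ≤ 1) :
    IsProbabilityMeasure (starMeasure μ) where
  measure_univ := by
    simp [starMeasure, Measure.map_apply measurable_inl, add_tsub_cancel_of_le hμ]

theorem comap_inl_starMeasure (μ : Measure S) : (starMeasure μ).comap Sum.inl = μ := by
  have hdisj : Disjoint (range (Sum.inl : S → S ⊕ Unit)) (range Sum.inr) :=
    isCompl_range_inl_range_inr.disjoint
  rw [starMeasure, measurableEmbedding_inl.comap_add, measurableEmbedding_inl.comap_map,
    ← Measure.map_dirac' measurable_inr, Measure.comap_smul,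
    comap_map_eq_zero_of_disjoint_range measurableEmbedding_inl measurable_inr hdisj, smul_zero,
    add_zero]

theorem starMeasure_range_inl (μ : Measure S) : starMeasure μ (range Sum.inl) = μ univ := by
  rw [← image_univ, ← measurableEmbedding_inl.comap_apply, comap_inl_starMeasure]

variable {μ ν : Measure S} {Γ : Measure ((S ⊕ Unit) × (S ⊕ Unit))}

theorem fst_basePart_le (hfst : Γ.fst = starMeasure μ) : (basePart Γ).fst ≤ μ :=
  (fst_comap_prodMap_le measurableEmbedding_inl measurableEmbedding_inl Γ).trans_eq
    (by rw [hfst, comap_inl_starMeasure])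

theorem snd_basePart_le (hsnd : Γ.snd = starMeasure ν) : (basePart Γ).snd ≤ ν :=
  (snd_comap_prodMap_le measurableEmbedding_inl measurableEmbedding_inl Γ).trans_eq
    (by rw [hsnd, comap_inl_starMeasure])

theorem exists_coupling_basePart_eq (hμ : μ univ ≤ 1) (hνμ : ν univ ≤ μ univ)
    {γ : Measure (S × S)} (hfst : γ.fst ≤ μ) (hsnd : γ.snd = ν) :
    ∃ Γ : Measure ((S ⊕ Unit) × (S ⊕ Unit)),
      Γ.fst = starMeasure μ ∧ Γ.snd = starMeasure ν ∧ basePart Γ = γ := by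
  have hγ : γ univ = ν univ := by rw [← hsnd, Measure.snd_univ]
  have : IsFiniteMeasure γ := ⟨hγ ▸ (hνμ.trans hμ).trans_lt ENNReal.one_lt_top⟩
  set ρ : Measure (S ⊕ Unit) :=
    (μ - γ.fst).map Sum.inl + (1 - μ univ) • Measure.dirac (Sum.inr ()) with hρ
  have hρ_univ : ρ univ = 1 - ν univ := by
    simp only [hρ, Measure.add_apply, Measure.map_apply measurable_inl .univ, preimage_univ,
      Measure.sub_apply .univ hfst, Measure.fst_univ, hγ, Measure.smul_apply, measure_univ,
      smul_eq_mul, mul_one]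
    rw [add_comm, tsub_add_tsub_cancel hμ hνμ]
  have hdisj : Disjoint (range (Prod.map Sum.inl Sum.inl : S × S → (S ⊕ Unit) × (S ⊕ Unit)))
      (range fun z : S ⊕ Unit => (z, Sum.inr ())) := by
    rw [disjoint_left]
    rintro _ ⟨p, rfl⟩ ⟨z, hz⟩
    exact Sum.inr_ne_inl (congrArg Prod.snd hz)
  refine ⟨γ.map (Prod.map Sum.inl Sum.inl) + ρ.map (fun z => (z, Sum.inr ())), ?_, ?_, ?_⟩
  · rw [Measure.fst_add, fst_map_prodMap measurable_inl measurable_inl,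
      Measure.fst_map_prodMk measurable_const, Measure.map_id', hρ,
      ← add_assoc, ← Measure.map_add _ _ measurable_inl, add_comm γ.fst,
      Measure.sub_add_cancel_of_le hfst, starMeasure]
  · rw [Measure.snd_add, snd_map_prodMap measurable_inl measurable_inl, hsnd,
      Measure.snd_map_prodMk measurable_id', Measure.map_const,
      hρ_univ, starMeasure]
  · rw [basePart, measurableEmbedding_prodMap_inl_inl.comap_add,
      measurableEmbedding_prodMap_inl_inl.comap_map,
      comap_map_eq_zero_of_disjoint_range measurableEmbedding_prodMap_inl_inl (by fun_prop) hdisj,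
      add_zero]

end StarMeasure

section Comparison

variable {S : Type} [MeasurableSpace S] {c : S → S → ℝ} {μ ν : Measure S}

theorem integral_augmentedCost_of_coupling {Γ : Measure ((S ⊕ Unit) × (S ⊕ Unit))}
    [IsFiniteMeasure Γ] (hc : Integrable (fun p => c p.1 p.2) (basePart Γ))
    (hfst : Γ.fst = starMeasure μ) (hsnd : Γ.snd = starMeasure ν) :
    ∫ p, augmentedCost c p.1 p.2 ∂Γ =
      μ.real univ + ν.real univ + ∫ p, (c p.1 p.2 - 2) ∂(basePart Γ) := by
  rw [integral_augmentedCost Γ hc, hfst, hsnd, measureReal_def, measureReal_def,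
    starMeasure_range_inl, starMeasure_range_inl, measureReal_def, measureReal_def]

theorem uwAux_le_wassersteinDist_starMeasure (hc : Measurable fun p : S × S => c p.1 p.2)
    (hc0 : ∀ x y, 0 ≤ c x y) (hc2 : ∀ x y, c x y ≤ 2) (hμ : μ univ ≤ 1) (hνμ : ν univ ≤ μ univ) :
    uwAux c μ ν ≤ wassersteinDist (augmentedCost c) (starMeasure μ) (starMeasure ν) := by
  have := isProbabilityMeasure_starMeasure hμ
  have := isProbabilityMeasure_starMeasure (hνμ.trans hμ)
  have : IsFiniteMeasure μ := ⟨hμ.trans_lt ENNReal.one_lt_top⟩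
  refine le_wassersteinDist fun Γ hfst hsnd => ?_
  have : IsFiniteMeasure Γ := ⟨by rw [← Measure.fst_univ, hfst]; exact measure_lt_top _ _⟩
  obtain ⟨γ, hle, hγ_fst, hγ_snd⟩ :=
    exists_ge_fst_le_snd_eq hνμ (fst_basePart_le hfst) (snd_basePart_le hsnd)
  have : IsFiniteMeasure γ :=
    ⟨by rw [← Measure.fst_univ]; exact (hγ_fst univ).trans_lt (measure_lt_top μ univ)⟩
  have hint := integrable_cost hc hc0 hc2
  have hcost : ∫ p, (c p.1 p.2 - 2) ∂γ ≤ ∫ p, (c p.1 p.2 - 2) ∂(basePart Γ) := by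
    have hmono : ∫ p, (2 - c p.1 p.2) ∂(basePart Γ) ≤ ∫ p, (2 - c p.1 p.2) ∂γ :=
      integral_mono_measure hle (.of_forall fun p => sub_nonneg.2 (hc2 p.1 p.2))
        ((integrable_const 2).sub (hint γ))
    simp_rw [← neg_sub (2 : ℝ), integral_neg]
    exact neg_le_neg hmono
  calc uwAux c μ ν ≤ μ.real univ - ν.real univ + ∫ p, c p.1 p.2 ∂γ :=
        uwAux_le_add_integral hc0 (hνμ.trans hμ) hγ_fst hγ_snd
    _ = μ.real univ + ν.real univ + ∫ p, (c p.1 p.2 - 2) ∂γ := by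
        rw [integral_sub_const_of_snd_eq (hint γ) hγ_snd 2]; ring
    _ ≤ μ.real univ + ν.real univ + ∫ p, (c p.1 p.2 - 2) ∂(basePart Γ) := by gcongr
    _ = ∫ p, augmentedCost c p.1 p.2 ∂Γ :=
        (integral_augmentedCost_of_coupling (hint _) hfst hsnd).symm

theorem wassersteinDist_starMeasure_le_uwAux (hc : Measurable fun p : S × S => c p.1 p.2)
    (hc0 : ∀ x y, 0 ≤ c x y) (hc2 : ∀ x y, c x y ≤ 2) (hμ : μ univ ≤ 1) (hνμ : ν univ ≤ μ univ) :
    wassersteinDist (augmentedCost c) (starMeasure μ) (starMeasure ν) ≤ uwAux c μ ν := by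
  have := isProbabilityMeasure_starMeasure hμ
  have : IsFiniteMeasure μ := ⟨hμ.trans_lt ENNReal.one_lt_top⟩
  refine le_uwAux (hνμ.trans hμ) hνμ fun γ hγ_fst hγ_snd => ?_
  obtain ⟨Γ, hfst, hsnd, rfl⟩ := exists_coupling_basePart_eq hμ hνμ hγ_fst hγ_snd
  have : IsFiniteMeasure Γ := ⟨by rw [← Measure.fst_univ, hfst]; exact measure_lt_top _ _⟩
  have hint := integrable_cost hc hc0 hc2 (basePart Γ)
  calc wassersteinDist (augmentedCost c) (starMeasure μ) (starMeasure ν)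
      ≤ ∫ p, augmentedCost c p.1 p.2 ∂Γ :=
        wassersteinDist_le_integral (augmentedCost_nonneg hc0) hfst hsnd
    _ = μ.real univ + ν.real univ + ∫ p, (c p.1 p.2 - 2) ∂(basePart Γ) :=
        integral_augmentedCost_of_coupling hint hfst hsnd
    _ = μ.real univ - ν.real univ + ∫ p, c p.1 p.2 ∂(basePart Γ) := by
        rw [integral_sub_const_of_snd_eq hint hγ_snd 2]; ring

theorem wassersteinDist_starMeasure_eq_uwAux (hc : Measurable fun p : S × S => c p.1 p.2)
    (hc0 : ∀ x y, 0 ≤ c x y) (hc2 : ∀ x y, c x y ≤ 2) (hμ : μ univ ≤ 1) (hνμ : ν univ ≤ μ univ) :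
    wassersteinDist (augmentedCost c) (starMeasure μ) (starMeasure ν) = uwAux c μ ν :=
  le_antisymm (wassersteinDist_starMeasure_le_uwAux hc hc0 hc2 hμ hνμ)
    (uwAux_le_wassersteinDist_starMeasure hc hc0 hc2 hμ hνμ)

end Comparison

theorem wasserstein_star_eq_unbalanced_general {S : Type} [MeasurableSpace S] {c : S → S → ℝ}
    (hc : Measurable fun p : S × S => c p.1 p.2) (hc0 : ∀ x y, 0 ≤ c x y)
    (hc2 : ∀ x y, c x y ≤ 2) (hc_comm : ∀ x y, c x y = c y x)
    (μ ν : Measure S) (hμ : μ univ ≤ 1) (hν : ν univ ≤ 1) :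
    wassersteinDist (augmentedCost c) (starMeasure μ) (starMeasure ν) = uwDist c μ ν := by
  unfold uwDist
  split_ifs with hνμ
  · exact wassersteinDist_starMeasure_eq_uwAux hc hc0 hc2 hμ hνμ
  · rw [wassersteinDist_comm (augmentedCost_comm hc_comm)]
    exact wassersteinDist_starMeasure_eq_uwAux hc hc0 hc2 hν (le_of_not_ge hνμ)

/-- On a complete separable metric space of diameter at most one, the classical
Wasserstein distance of the augmented probability measures `μ*` and `ν*` on `(S*, d*)`
equals the unbalanced Wasserstein distance `W(μ,ν)`. -/
theorem wasserstein_star_eq_unbalanced {S : Type} [MetricSpace S] [CompleteSpace S]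
    [TopologicalSpace.SeparableSpace S] [MeasurableSpace S] [BorelSpace S]
    (hd : ∀ x y : S, dist x y ≤ 1)
    (μ ν : Measure S) (hμ : μ Set.univ ≤ 1) (hν : ν Set.univ ≤ 1) :
    wassersteinDist dStar (starMeasure μ) (starMeasure ν) = uwDist dist μ ν := by
  have := UniformSpace.secondCountable_of_separable S
  rw [← augmentedCost_dist]
  exact wasserstein_star_eq_unbalanced_general measurable_dist (fun _ _ => dist_nonneg)
    (fun x y => (hd x y).trans one_le_two) dist_comm μ ν hμ hν

end
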